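/- Let L be a right Leibniz algebra over a field of characteristic ≠ 2 and B a two-sided ideal of L that is Es_k-right nil for some integer k ≥ 1. Then every product of elements of L (parenthesized in an arbitrary way) having at least 4k² − 2k + 1 factors in B belongs to the two-sided ideal of L generated by (B^k)_{(L,k)}; equivalently, B^{⟨4k² − 2k + 1⟩} is contained in the ideal generated by (B^k)_{(L,k)}. -/

import Mathlib

open Classical

/-- The binary product `mul` is bilinear over `F`. -/
def IsBilin (F : Type*) [Field F] {L : Type*} [AddCommGroup L] [Module F L]
    (mul : L → L → L) : Prop :=
  (∀ a b c : L, mul (a + b) c = mul a c + mul b c) ∧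
  (∀ a b c : L, mul a (b + c) = mul a b + mul a c) ∧
  (∀ (r : F) (a b : L), mul (r • a) b = r • mul a b) ∧
  (∀ (r : F) (a b : L), mul a (r • b) = r • mul a b)

/-- The (right) Leibniz identity: `a(bc) = (ab)c - (ac)b`. -/
def IsRightLeibniz {L : Type*} [AddCommGroup L] (mul : L → L → L) : Prop :=
  ∀ a b c : L, mul a (mul b c) = mul (mul a b) c - mul (mul a c) b

/-- The left Leibniz identity: `a(bc) = (ab)c + b(ac)`. -/
def IsLeftLeibniz {L : Type*} [AddCommGroup L] (mul : L → L → L) : Prop :=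
  ∀ a b c : L, mul a (mul b c) = mul (mul a b) c + mul b (mul a c)

/-- `B` is a two-sided ideal: `xb ∈ B` and `bx ∈ B` for all `x ∈ L`, `b ∈ B`. -/
def IsIdeal {F : Type*} [Field F] {L : Type*} [AddCommGroup L] [Module F L]
    (mul : L → L → L) (B : Submodule F L) : Prop :=
  ∀ (x b : L), b ∈ B → mul x b ∈ B ∧ mul b x ∈ B

/-- `Ess F mul`: the two-sided ideal of `L` generated by the squares `{xx : x ∈ L}`. -/
def Ess (F : Type*) [Field F] {L : Type*} [AddCommGroup L] [Module F L]
    (mul : L → L → L) : Submodule F L :=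
  sInf {I : Submodule F L | (∀ x : L, mul x x ∈ I) ∧ IsIdeal mul I}

/-- The two-sided ideal of `L` generated by a subspace `S`. -/
def idealClosure (F : Type*) [Field F] {L : Type*} [AddCommGroup L] [Module F L]
    (mul : L → L → L) (S : Submodule F L) : Submodule F L :=
  sInf {I : Submodule F L | S ≤ I ∧ IsIdeal mul I}

/-- Right powers: `B^0 = L` (convention), `B^1 = B`,
`B^{n+1} = span {bc : b ∈ B^n, c ∈ B}`. -/
def rpow (F : Type*) [Field F] {L : Type*} [AddCommGroup L] [Module F L]
    (mul : L → L → L) (B : Submodule F L) : ℕ → Submodule F L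
  | 0 => ⊤
  | 1 => B
  | n + 2 => Submodule.span F
      {x : L | ∃ b ∈ rpow F mul B (n + 1), ∃ c ∈ B, x = mul b c}

/-- Left powers: `^0B = L` (convention), `^1B = B`,
`^{n+1}B = span {bc : b ∈ B, c ∈ ^nB}`. -/
def lpow (F : Type*) [Field F] {L : Type*} [AddCommGroup L] [Module F L]
    (mul : L → L → L) (B : Submodule F L) : ℕ → Submodule F L
  | 0 => ⊤
  | 1 => B
  | n + 2 => Submodule.span F
      {x : L | ∃ b ∈ B, ∃ c ∈ lpow F mul B (n + 1), x = mul b c}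

/-- The right-normed product `rightProd mul a [b₁, …, bₖ] = ((…(a b₁)…) bₖ)`,
with all parentheses associated to the left. -/
def rightProd {L : Type*} (mul : L → L → L) : L → List L → L
  | a, [] => a
  | a, b :: l => rightProd mul (mul a b) l

/-- `D_{(L,k)}`: the span of all right-normed products `d a_k ⋯ a_1`
with `d ∈ D` and `a_i ∈ L`. -/
def rightMulSpan (F : Type*) [Field F] {L : Type*} [AddCommGroup L] [Module F L]
    (mul : L → L → L) (D : Submodule F L) (k : ℕ) : Submodule F L :=
  Submodule.span F
    {x : L | ∃ d ∈ D, ∃ l : List L, l.length = k ∧ x = rightProd mul d l}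

/-- A formal nonassociative product (a word of elements of `L` parenthesized
in an arbitrary way). -/
inductive PTree (L : Type*) where
  | leaf : L → PTree L
  | node : PTree L → PTree L → PTree L

/-- Evaluation of a parenthesized product in `L`. -/
def PTree.eval {L : Type*} (mul : L → L → L) : PTree L → L
  | .leaf a => a
  | .node s t => mul (PTree.eval mul s) (PTree.eval mul t)

/-- The list of factors of a parenthesized product, in order. -/
def PTree.leaves {L : Type*} : PTree L → List L
  | .leaf a => [a]
  | .node s t => s.leaves ++ t.leaves

/-- The length (number of factors) of a parenthesized product. -/
def PTree.length {L : Type*} (t : PTree L) : ℕ := t.leaves.length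

/-- The weight of a parenthesized product with respect to `B`:
the number of its factors lying in `B`. -/
noncomputable def PTree.weight {F : Type*} [Field F] {L : Type*} [AddCommGroup L]
    [Module F L] (B : Submodule F L) (t : PTree L) : ℕ :=
  t.leaves.countP (fun y => decide (y ∈ B))

/-- `B^{⟨n⟩}`: the span of all products of elements of `L` of weight at least `n`
with respect to `B`. -/
noncomputable def weightSpan (F : Type*) [Field F] {L : Type*} [AddCommGroup L]
    [Module F L] (mul : L → L → L) (B : Submodule F L) (n : ℕ) : Submodule F L :=
  Submodule.span F
    {x : L | ∃ t : PTree L, n ≤ PTree.weight B t ∧ x = PTree.eval mul t}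

/-- `B^{{n}}`: the span of all length-`n` products all of whose factors lie in `B`. -/
def lengthSpanIn (F : Type*) [Field F] {L : Type*} [AddCommGroup L] [Module F L]
    (mul : L → L → L) (B : Submodule F L) (n : ℕ) : Submodule F L :=
  Submodule.span F
    {x : L | ∃ t : PTree L, PTree.length t = n ∧ (∀ a ∈ PTree.leaves t, a ∈ B) ∧
      x = PTree.eval mul t}

/-!
The identity `x(bc) = (xb)c - (xc)b` rewrites right multiplication by a product as a combination
of successive right multiplications by its factors. So if a sequence of subspaces, starting with
`L` and then a subspace containing `B`, is stable under right multiplication, and right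
multiplication by `B` moves one step along it, then a product of weight `w` lies in step `w`. The
right powers of `B` form such a sequence. It remains one when, from step `m ≥ 1` on, it is replaced
by the spans `(B^m)_{(L,i)}`, along which every right multiplication, not only one by `B`, moves a
step. Hence `B^{⟨m+n⟩} ≤ (B^m)_{(L,n)}`, and the theorem is the case `m = n = k`, since
`2k ≤ 4k² - 2k + 1`.
-/

section

variable {F : Type*} [Field F] {L : Type*} [AddCommGroup L] [Module F L]
  {mul : L → L → L} {B : Submodule F L}

namespace IsBilin

/-- Right multiplication by `c` as a linear map, so that a condition on `mul x c` for `x` in a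
span can be checked on generators. -/
def mulRight (h : IsBilin F mul) (c : L) : L →ₗ[F] L where
  toFun x := mul x c
  map_add' x y := h.1 x y c
  map_smul' r x := h.2.2.1 r x c

theorem mul_mem_of_mem_span (h : IsBilin F mul) {S : Set L} {T : Submodule F L} {c x : L}
    (hS : ∀ y ∈ S, mul y c ∈ T) (hx : x ∈ Submodule.span F S) : mul x c ∈ T :=
  (Submodule.span_le (p := T.comap (h.mulRight c))).2 hS hx

end IsBilin

theorem IsRightLeibniz.mul_mul {L : Type*} [AddCommGroup L] {mul : L → L → L}
    (h : IsRightLeibniz mul) (a b c : L) :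
    mul (mul a b) c = mul a (mul b c) + mul (mul a c) b := by
  rw [h a b c, sub_add_cancel]

theorem le_idealClosure (S : Submodule F L) : S ≤ idealClosure F mul S :=
  le_sInf fun _ hI => hI.1

theorem weightSpan_antitone : Antitone (weightSpan F mul B) := fun _ _ hmn =>
  Submodule.span_mono fun _ ⟨t, ht, hx⟩ => ⟨t, hmn.trans ht, hx⟩

theorem rightProd_concat {L : Type*} (mul : L → L → L) (a : L) (l : List L) (c : L) :
    rightProd mul a (l ++ [c]) = mul (rightProd mul a l) c := by
  induction l generalizing a with
  | nil => rfl
  | cons b _ ih => exact ih (mul a b)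

section rightMulSpan

variable {D : Submodule F L}

@[simp]
theorem rightMulSpan_zero : rightMulSpan F mul D 0 = D := by
  simp [rightMulSpan, rightProd]

theorem rightMulSpan_succ_le (hD : ∀ x ∈ D, ∀ c, mul x c ∈ D) (n : ℕ) :
    rightMulSpan F mul D (n + 1) ≤ rightMulSpan F mul D n := by
  refine Submodule.span_mono ?_
  rintro _ ⟨d, hd, (_ | ⟨a, l⟩), hl, rfl⟩
  · cases hl
  · exact ⟨mul d a, hD d hd a, l, Nat.succ.inj hl, rfl⟩

theorem rightMulSpan_antitone (hD : ∀ x ∈ D, ∀ c, mul x c ∈ D) :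
    Antitone (rightMulSpan F mul D) :=
  antitone_nat_of_succ_le (rightMulSpan_succ_le hD)

theorem mul_mem_rightMulSpan_succ (hbil : IsBilin F mul) {n : ℕ} {x : L}
    (hx : x ∈ rightMulSpan F mul D n) (c : L) : mul x c ∈ rightMulSpan F mul D (n + 1) := by
  refine hbil.mul_mem_of_mem_span ?_ hx
  rintro _ ⟨d, hd, l, hl, rfl⟩
  exact Submodule.subset_span ⟨d, hd, l ++ [c], by simp [hl], (rightProd_concat mul d l c).symm⟩

end rightMulSpan

namespace PTree

theorem weight_leaf (a : L) : (leaf a).weight B = if a ∈ B then 1 else 0 := by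
  simp [weight, leaves, List.countP_singleton]

theorem weight_node (s t : PTree L) : (node s t).weight B = s.weight B + t.weight B :=
  List.countP_append

end PTree

/-- A sequence of subspaces stable under right multiplication, in which right multiplication by an
element of `B` raises the index by one. Such a sequence bounds products by their weight. It is not
required to be decreasing. -/
structure IsRightFiltration (mul : L → L → L) (B : Submodule F L) (N : ℕ → Submodule F L) :
    Prop where
  mul_mem : ∀ {j : ℕ} {x : L}, x ∈ N j → ∀ c, mul x c ∈ N j
  mul_mem_succ : ∀ {j : ℕ} {x c : L}, x ∈ N j → c ∈ B → mul x c ∈ N (j + 1)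

/-- The sequence `N 0, …, N m, (N m)_{(L,1)}, (N m)_{(L,2)}, …`, that is, `N` continued after step
`m` by iterated right multiples. Truncated subtraction selects `(N j)_{(L,0)} = N j` when
`j ≤ m`. -/
def continueByRightMul (mul : L → L → L) (N : ℕ → Submodule F L) (m j : ℕ) : Submodule F L :=
  rightMulSpan F mul (N (min j m)) (j - m)

theorem continueByRightMul_of_le {N : ℕ → Submodule F L} {m j : ℕ} (h : j ≤ m) :
    continueByRightMul mul N m j = N j := by
  simp [continueByRightMul, h]

theorem continueByRightMul_add (N : ℕ → Submodule F L) (m i : ℕ) :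
    continueByRightMul mul N m (m + i) = rightMulSpan F mul (N m) i := by
  simp [continueByRightMul]

namespace IsRightFiltration

variable {N : ℕ → Submodule F L}

theorem mul_eval_mem (hN : IsRightFiltration mul B N) (hleib : IsRightLeibniz mul) {j : ℕ}
    {x : L} (hx : x ∈ N j) (t : PTree L) : mul x (t.eval mul) ∈ N (j + t.weight B) := by
  induction t generalizing j x with
  | leaf a =>
    rw [PTree.weight_leaf]
    split_ifs with ha
    · exact hN.mul_mem_succ hx ha
    · exact hN.mul_mem hx a
  | node s t hs ht =>
    rw [PTree.weight_node, PTree.eval, hleib]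
    have hst := ht (hs hx)
    have hts := hs (ht hx)
    rw [add_assoc] at hst
    rw [add_assoc, add_comm (t.weight B)] at hts
    exact Submodule.sub_mem _ hst hts

theorem eval_mem (hN : IsRightFiltration mul B N) (hleib : IsRightLeibniz mul)
    (h_zero : N 0 = ⊤) (h_one : B ≤ N 1) (t : PTree L) : t.eval mul ∈ N (t.weight B) := by
  induction t with
  | leaf a =>
    rw [PTree.weight_leaf]
    split_ifs with ha
    · exact h_one ha
    · exact h_zero ▸ Submodule.mem_top
  | node s t hs _ =>
    rw [PTree.weight_node]
    exact hN.mul_eval_mem hleib hs t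

theorem continueByRightMul (hN : IsRightFiltration mul B N) (hbil : IsBilin F mul) (m : ℕ) :
    IsRightFiltration mul B (continueByRightMul mul N m) where
  mul_mem hx c :=
    rightMulSpan_succ_le (fun _ hy => hN.mul_mem hy) _ (mul_mem_rightMulSpan_succ hbil hx c)
  mul_mem_succ {j x c} hx hc := by
    rcases lt_or_ge j m with hj | hj
    · rw [continueByRightMul_of_le hj.le] at hx
      rw [continueByRightMul_of_le hj]
      exact hN.mul_mem_succ hx hc
    · obtain ⟨i, rfl⟩ := Nat.exists_eq_add_of_le hj
      rw [continueByRightMul_add] at hx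
      rw [add_assoc, continueByRightMul_add]
      exact mul_mem_rightMulSpan_succ hbil hx c

theorem weightSpan_le_rightMulSpan (hN : IsRightFiltration mul B N) (hbil : IsBilin F mul)
    (hleib : IsRightLeibniz mul) (h_zero : N 0 = ⊤) (h_one : B ≤ N 1) {m : ℕ} (hm : 1 ≤ m)
    (n : ℕ) : weightSpan F mul B (m + n) ≤ rightMulSpan F mul (N m) n := by
  refine Submodule.span_le.2 ?_
  rintro _ ⟨t, ht, rfl⟩
  have hmem := (hN.continueByRightMul hbil m).eval_mem hleib
    ((continueByRightMul_of_le m.zero_le).trans h_zero)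
    (h_one.trans (continueByRightMul_of_le hm).ge) t
  obtain ⟨i, hi⟩ := Nat.exists_eq_add_of_le ht
  rw [hi, add_assoc, continueByRightMul_add] at hmem
  exact rightMulSpan_antitone (fun _ hx => hN.mul_mem hx) (Nat.le_add_right n i) hmem

end IsRightFiltration

theorem mul_mem_rpow (hbil : IsBilin F mul) (hleib : IsRightLeibniz mul) (hB : IsIdeal mul B)
    {n : ℕ} {x : L} (hx : x ∈ rpow F mul B n) (c : L) : mul x c ∈ rpow F mul B n := by
  induction n using rpow.induct generalizing x c with
  | case1 => exact Submodule.mem_top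
  | case2 => exact (hB c x hx).2
  | case3 n ih =>
    refine hbil.mul_mem_of_mem_span (T := rpow F mul B (n + 2)) ?_ hx
    rintro _ ⟨b, hb, d, hd, rfl⟩
    rw [hleib.mul_mul]
    exact Submodule.add_mem _ (Submodule.subset_span ⟨b, hb, mul d c, (hB c d hd).2, rfl⟩)
      (Submodule.subset_span ⟨mul b c, ih hb c, d, hd, rfl⟩)

theorem mul_mem_rpow_succ (hB : IsIdeal mul B) {n : ℕ} {x c : L} (hx : x ∈ rpow F mul B n)
    (hc : c ∈ B) : mul x c ∈ rpow F mul B (n + 1) := by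
  cases n with
  | zero => exact (hB x c hc).1
  | succ n => exact Submodule.subset_span ⟨x, hx, c, hc, rfl⟩

theorem isRightFiltration_rpow (hbil : IsBilin F mul) (hleib : IsRightLeibniz mul)
    (hB : IsIdeal mul B) : IsRightFiltration mul B (rpow F mul B) where
  mul_mem hx c := mul_mem_rpow hbil hleib hB hx c
  mul_mem_succ hx hc := mul_mem_rpow_succ hB hx hc

theorem weightSpan_le_idealClosure_general (hbil : IsBilin F mul) (hleib : IsRightLeibniz mul)
    (hB : IsIdeal mul B) {m : ℕ} (hm : 1 ≤ m) (n : ℕ) :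
    weightSpan F mul B (m + n) ≤ rightMulSpan F mul (rpow F mul B m) n :=
  (isRightFiltration_rpow hbil hleib hB).weightSpan_le_rightMulSpan hbil hleib rfl le_rfl hm n

end

/-- If `B` is `Es_k`-right nil, then `B^{⟨4k² - 2k + 1⟩}` is
contained in the two-sided ideal of `L` generated by `(B^k)_{(L,k)}`. -/
theorem weightSpan_le_idealClosure
    {F : Type*} [Field F] {L : Type*} [AddCommGroup L] [Module F L]
    (h2 : (2 : F) ≠ 0) (mul : L → L → L)
    (hbil : IsBilin F mul) (hleib : IsRightLeibniz mul)
    (k : ℕ) (hk : 1 ≤ k)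
    (B : Submodule F L) (hB : IsIdeal mul B)
    (hnil : rightMulSpan F mul (B ⊓ Ess F mul) k = ⊥) :
    weightSpan F mul B (4 * k ^ 2 - 2 * k + 1) ≤
      idealClosure F mul (rightMulSpan F mul (rpow F mul B k) k) := by
  have hle : k + k ≤ 4 * k ^ 2 - 2 * k + 1 := by
    have hsq : k ≤ k ^ 2 := Nat.le_self_pow two_ne_zero k
    omega
  exact (weightSpan_antitone hle).trans
    ((weightSpan_le_idealClosure_general hbil hleib hB hk k).trans (le_idealClosure _))
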